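/- If there exists X_α^0 ∈ 𝒳_α with E_{λQ_α^c}[X_α^0] = γ_α^c and E_μ[X_α^0] < α, then every X_α ∈ 𝒳_α with E_{λQ_α^c}[X_α] = γ_α^c satisfies λ·Q_α^c(A) = 0, where A := {ω ∈ Ω : X_α(ω) ≠ 1}. -/

import Mathlib

open MeasureTheory Filter Topology
open scoped ENNReal

/-- `X` belongs to the space `𝒳` of bounded measurable real-valued functions on `Ω`. -/
def MemX {Ω : Type*} [MeasurableSpace Ω] (X : Ω → ℝ) : Prop :=
  Measurable X ∧ ∃ M : ℝ, ∀ ω, |X ω| ≤ M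

/-- A sublinear operator on `𝒳`: monotone, constant preserving, subadditive and
positively homogeneous. -/
def IsSublinearOp {Ω : Type*} [MeasurableSpace Ω] (ρ : (Ω → ℝ) → ℝ) : Prop :=
  (∀ X Y : Ω → ℝ, MemX X → MemX Y → (∀ ω, Y ω ≤ X ω) → ρ Y ≤ ρ X) ∧
  (∀ c : ℝ, ρ (fun _ => c) = c) ∧
  (∀ X Y : Ω → ℝ, MemX X → MemX Y → ρ (X + Y) ≤ ρ X + ρ Y) ∧
  (∀ c : ℝ, 0 ≤ c → ∀ X : Ω → ℝ, MemX X → ρ (c • X) = c * ρ X)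

/-- A linear functional on `𝒳`. -/
def IsLinearOp {Ω : Type*} [MeasurableSpace Ω] (L : (Ω → ℝ) → ℝ) : Prop :=
  (∀ X Y : Ω → ℝ, MemX X → MemX Y → L (X + Y) = L X + L Y) ∧
  (∀ (c : ℝ) (X : Ω → ℝ), MemX X → L (c • X) = c * L X)

/-- `L` is dominated by `ρ` on `𝒳`. -/
def Dominated {Ω : Type*} [MeasurableSpace Ω] (L ρ : (Ω → ℝ) → ℝ) : Prop :=
  ∀ X : Ω → ℝ, MemX X → L X ≤ ρ X

/-- The conjugate operator `E_ῡ[X] := -E_υ[-X]`. -/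
def conjOp {Ω : Type*} (ρ : (Ω → ℝ) → ℝ) : (Ω → ℝ) → ℝ := fun X => -ρ (-X)

/-- The set `𝒳_α` of test functions at significance level `α`. -/
def testSet {Ω : Type*} [MeasurableSpace Ω] (Emu : (Ω → ℝ) → ℝ) (α : ℝ) : Set (Ω → ℝ) :=
  {X | MemX X ∧ (∀ ω, 0 ≤ X ω ∧ X ω ≤ 1) ∧ Emu X ≤ α}

/-- A positive normalized linear functional `Qp` is *pure additive* if there is a
sequence of measurable sets `A n ↓ ∅` with `Qp(1_{A n}) → 1`. -/
def PureAdditive {Ω : Type*} [MeasurableSpace Ω] (Qp : (Ω → ℝ) → ℝ) : Prop :=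
  ∃ A : ℕ → Set Ω, (∀ n, MeasurableSet (A n)) ∧ Antitone A ∧ (⋂ n, A n) = ∅ ∧
    Tendsto (fun n => Qp ((A n).indicator fun _ => (1 : ℝ))) atTop (𝓝 1)

/-- Hypothesis (H1): for every sequence of measurable sets `A n ↓ ∅` such that
`lim E_υ[1_{A n}]` exists and is nonzero, one has `lim E_μ[1_{A n}] = 0`. -/
def HypH1 {Ω : Type*} [MeasurableSpace Ω] (Emu Eups : (Ω → ℝ) → ℝ) : Prop :=
  ∀ A : ℕ → Set Ω, (∀ n, MeasurableSet (A n)) → Antitone A → (⋂ n, A n) = ∅ →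
    ∀ l : ℝ, Tendsto (fun n => Eups ((A n).indicator fun _ => (1 : ℝ))) atTop (𝓝 l) →
      l ≠ 0 →
      Tendsto (fun n => Emu ((A n).indicator fun _ => (1 : ℝ))) atTop (𝓝 0)

/-- Hypothesis (H2): for every `X ∈ 𝒳_α` with `E_μ[X] > 0` and every positive
integer `K`, `E_μ[X] > E_μ[(X - 1/K)⁺]`. -/
def HypH2 {Ω : Type*} [MeasurableSpace Ω] (Emu : (Ω → ℝ) → ℝ) (α : ℝ) : Prop :=
  ∀ X ∈ testSet Emu α, 0 < Emu X → ∀ K : ℕ, 0 < K →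
    Emu (fun ω => max (X ω - 1 / (K : ℝ)) 0) < Emu X

/-- Hypothesis (H3): for every sequence of measurable sets `A n ↓ ∅`,
`lim E_μ[1_{A n}] < 1` and `lim E_υ[1_{A n}] < 1`. -/
def HypH3 {Ω : Type*} [MeasurableSpace Ω] (Emu Eups : (Ω → ℝ) → ℝ) : Prop :=
  ∀ A : ℕ → Set Ω, (∀ n, MeasurableSet (A n)) → Antitone A → (⋂ n, A n) = ∅ →
    (∀ l : ℝ, Tendsto (fun n => Emu ((A n).indicator fun _ => (1 : ℝ))) atTop (𝓝 l) →
      l < 1) ∧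
    (∀ l : ℝ, Tendsto (fun n => Eups ((A n).indicator fun _ => (1 : ℝ))) atTop (𝓝 l) →
      l < 1)

/-! A concave objective that attains its maximum over a convex sublevel set at a point where the
constraint is slack attains there its maximum over the whole ambient convex set. The size constraint
is of this kind because a sublinear operator is convex. Over all measurable functions with values in
`[0, 1]`, the maximum of the integral against a finite measure is the total mass, attained at the
constant `1`; a function with values in `[0, 1]` reaches it only by being almost everywhere `1`. -/

theorem isMaxOn_of_isMaxOn_convex_sublevel {𝕜 E : Type*} [Field 𝕜] [LinearOrder 𝕜]
    [IsStrictOrderedRing 𝕜] [AddCommGroup E] [Module 𝕜 E] {s : Set E} {f g : E → 𝕜} {x : E} {a : 𝕜}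
    (hf : ConcaveOn 𝕜 s f) (hg : ConvexOn 𝕜 s g) (hx : x ∈ s) (hlt : g x < a)
    (hmax : IsMaxOn f {y ∈ s | g y ≤ a} x) : IsMaxOn f s x := by
  intro y hy
  rcases le_or_gt (g y) a with hya | hya
  · exact hmax ⟨hy, hya⟩
  obtain ⟨r, t, hr, ht, hrt, hmix⟩ : a ∈ openSegment 𝕜 (g x) (g y) := by
    rw [openSegment_eq_Ioo (hlt.trans hya)]
    exact ⟨hlt, hya⟩
  have hfeasible : r • x + t • y ∈ {z ∈ s | g z ≤ a} :=
    ⟨hg.1 hx hy hr.le ht.le hrt, (hg.2 hx hy hr.le ht.le hrt).trans_eq hmix⟩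
  have hchord : r * f x + t * f y ≤ r * f x + t * f x := calc
    r * f x + t * f y ≤ f (r • x + t • y) := hf.2 hx hy hr.le ht.le hrt
    _ ≤ f x := hmax hfeasible
    _ = r * f x + t * f x := by rw [← add_mul, hrt, one_mul]
  exact le_of_mul_le_mul_left (le_of_add_le_add_left hchord) ht

theorem isMaxOn_of_eq_sSup_image {ι β : Type*} [ConditionallyCompleteLattice β] {f : ι → β}
    {s : Set ι} {x : ι} (hbdd : BddAbove (f '' s)) (hx : f x = sSup (f '' s)) : IsMaxOn f s x :=
  fun _ hy => (le_csSup hbdd (Set.mem_image_of_mem f hy)).trans_eq hx.symm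

section SublinearOperators

variable {Ω : Type*} [MeasurableSpace Ω]

theorem MemX.smul {X : Ω → ℝ} (hX : MemX X) (c : ℝ) : MemX (c • X) := by
  obtain ⟨hmeas, M, hM⟩ := hX
  refine ⟨hmeas.const_smul c, |c| * M, fun ω => ?_⟩
  rw [Pi.smul_apply, smul_eq_mul, abs_mul]
  exact mul_le_mul_of_nonneg_left (hM ω) (abs_nonneg c)

theorem MemX.add {X Y : Ω → ℝ} (hX : MemX X) (hY : MemX Y) : MemX (X + Y) := by
  obtain ⟨hXmeas, M, hM⟩ := hX
  obtain ⟨hYmeas, N, hN⟩ := hY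
  exact ⟨hXmeas.add hYmeas, M + N, fun ω => (abs_add_le _ _).trans (add_le_add (hM ω) (hN ω))⟩

theorem IsSublinearOp.convexOn {ρ : (Ω → ℝ) → ℝ} (hρ : IsSublinearOp ρ) :
    ConvexOn ℝ {X | MemX X} ρ := by
  obtain ⟨-, -, hsubadd, hhom⟩ := hρ
  refine ⟨fun X hX Y hY r t _ _ _ => (hX.smul r).add (hY.smul t), fun X hX Y hY r t hr ht _ => ?_⟩
  calc
    ρ (r • X + t • Y) ≤ ρ (r • X) + ρ (t • Y) := hsubadd _ _ (hX.smul r) (hY.smul t)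
    _ = r • ρ X + t • ρ Y := by rw [hhom r hr X hX, hhom t ht Y hY, smul_eq_mul, smul_eq_mul]

end SublinearOperators

section Integral

variable {Ω : Type*} [MeasurableSpace Ω]

theorem concaveOn_integral (ν : Measure Ω) :
    ConcaveOn ℝ {X : Ω → ℝ | Integrable X ν} fun X => ∫ ω, X ω ∂ν := by
  refine ⟨fun X hX Y hY r t _ _ _ => (hX.smul r).add (hY.smul t), fun X hX Y hY r t _ _ _ => ?_⟩
  simp only [integral_add' (hX.smul r) (hY.smul t), Pi.smul_apply, integral_smul, le_refl]

theorem integral_le_measureReal_univ {ν : Measure Ω} [IsFiniteMeasure ν] {X : Ω → ℝ}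
    (hX : Integrable X ν) (hle : X ≤ᵐ[ν] 1) : ∫ ω, X ω ∂ν ≤ ν.real Set.univ := by
  simpa using integral_mono_ae hX (integrable_const 1) hle

theorem ae_eq_one_of_measureReal_univ_le_integral {ν : Measure Ω} [IsFiniteMeasure ν]
    {X : Ω → ℝ} (hX : Integrable X ν) (hle : X ≤ᵐ[ν] 1)
    (hmass : ν.real Set.univ ≤ ∫ ω, X ω ∂ν) : X =ᵐ[ν] 1 := by
  refine (integral_eq_iff_of_ae_le hX (integrable_const 1) hle).1 ?_
  simpa using (integral_le_measureReal_univ hX hle).antisymm hmass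

end Integral

section RandomizedTests

/-- The randomized tests on `Ω`: measurable functions with values in `[0, 1]`, where the order
interval is that of the pointwise order. They are the tests of `testSet` without the constraint
on the size. -/
def randomizedTests (Ω : Type*) [MeasurableSpace Ω] : Set (Ω → ℝ) :=
  {X | Measurable X} ∩ Set.Icc 0 1

variable {Ω : Type*} [MeasurableSpace Ω]

theorem one_mem_randomizedTests : (1 : Ω → ℝ) ∈ randomizedTests Ω :=
  ⟨measurable_const, zero_le_one, le_rfl⟩

theorem memX_of_mem_randomizedTests {X : Ω → ℝ} (hX : X ∈ randomizedTests Ω) : MemX X :=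
  ⟨hX.1, 1, fun ω => (abs_of_nonneg (hX.2.1 ω)).trans_le (hX.2.2 ω)⟩

theorem convex_randomizedTests : Convex ℝ (randomizedTests Ω) :=
  Convex.inter (fun _ hX _ hY r t _ _ _ => (hX.const_smul r).add (hY.const_smul t))
    (convex_Icc 0 1)

theorem testSet_eq_sublevel_randomizedTests (ρ : (Ω → ℝ) → ℝ) (α : ℝ) :
    testSet ρ α = {X ∈ randomizedTests Ω | ρ X ≤ α} := by
  ext X
  constructor
  · rintro ⟨hX, h01, hα⟩
    exact ⟨⟨hX.1, fun ω => (h01 ω).1, fun ω => (h01 ω).2⟩, hα⟩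
  · rintro ⟨hX, hα⟩
    exact ⟨memX_of_mem_randomizedTests hX, fun ω => ⟨hX.2.1 ω, hX.2.2 ω⟩, hα⟩

variable {ν : Measure Ω} [IsFiniteMeasure ν]

theorem integrable_of_mem_randomizedTests {X : Ω → ℝ} (hX : X ∈ randomizedTests Ω) :
    Integrable X ν :=
  .of_bound hX.1.aestronglyMeasurable 1 (ae_of_all _ fun ω =>
    (Real.norm_of_nonneg (hX.2.1 ω)).trans_le (hX.2.2 ω))

theorem bddAbove_image_integral_testSet (ρ : (Ω → ℝ) → ℝ) (α : ℝ) {c : ℝ} (hc : 0 ≤ c) :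
    BddAbove ((fun X : Ω → ℝ => c * ∫ ω, X ω ∂ν) '' testSet ρ α) := by
  refine ⟨c * ν.real Set.univ, Set.forall_mem_image.2 fun X hX => ?_⟩
  rw [testSet_eq_sublevel_randomizedTests] at hX
  exact mul_le_mul_of_nonneg_left (integral_le_measureReal_univ
    (integrable_of_mem_randomizedTests hX.1) (ae_of_all _ hX.1.2.2)) hc

theorem mul_measureReal_univ_le_of_isMaxOn_testSet {ρ : (Ω → ℝ) → ℝ} {α c : ℝ} {X : Ω → ℝ}
    (hρ : ConvexOn ℝ (randomizedTests Ω) ρ) (hc : 0 ≤ c) (hX : X ∈ testSet ρ α) (hlt : ρ X < α)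
    (hmax : IsMaxOn (fun Y : Ω → ℝ => c * ∫ ω, Y ω ∂ν) (testSet ρ α) X) :
    c * ν.real Set.univ ≤ c * ∫ ω, X ω ∂ν := by
  rw [testSet_eq_sublevel_randomizedTests] at hX hmax
  have hconcave : ConcaveOn ℝ (randomizedTests Ω) fun Y => c * ∫ ω, Y ω ∂ν :=
    ((concaveOn_integral ν).subset (fun _ => integrable_of_mem_randomizedTests)
      convex_randomizedTests).smul hc
  simpa using isMaxOn_of_isMaxOn_convex_sublevel hconcave hρ hX.1 hlt hmax one_mem_randomizedTests

theorem all_optimal_charge_one_general {ρ : (Ω → ℝ) → ℝ} {α c γ : ℝ}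
    (hρ : ConvexOn ℝ (randomizedTests Ω) ρ) (hc : 0 ≤ c)
    (hγ : γ = sSup ((fun X : Ω → ℝ => c * ∫ ω, X ω ∂ν) '' testSet ρ α))
    (hslack : ∃ X₀ ∈ testSet ρ α, c * ∫ ω, X₀ ω ∂ν = γ ∧ ρ X₀ < α)
    {X : Ω → ℝ} (hX : X ∈ testSet ρ α) (hXopt : c * ∫ ω, X ω ∂ν = γ) :
    c * (ν {ω | X ω ≠ 1}).toReal = 0 := by
  obtain ⟨X₀, hX₀, hX₀opt, hX₀lt⟩ := hslack
  have hmax : IsMaxOn (fun Y : Ω → ℝ => c * ∫ ω, Y ω ∂ν) (testSet ρ α) X₀ :=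
    isMaxOn_of_eq_sSup_image (bddAbove_image_integral_testSet ρ α hc) (hX₀opt.trans hγ)
  have hmass : c * ν.real Set.univ ≤ c * ∫ ω, X ω ∂ν :=
    (mul_measureReal_univ_le_of_isMaxOn_testSet hρ hc hX₀ hX₀lt hmax).trans_eq
      (hX₀opt.trans hXopt.symm)
  rcases hc.eq_or_lt with rfl | hpos
  · exact zero_mul _
  rw [testSet_eq_sublevel_randomizedTests] at hX
  have hae : X =ᵐ[ν] 1 :=
    ae_eq_one_of_measureReal_univ_le_integral (integrable_of_mem_randomizedTests hX.1)
      (ae_of_all _ hX.1.2.2) (le_of_mul_le_mul_left hmass hpos)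
  have hnull : ν {ω | X ω ≠ 1} = 0 := ae_iff.1 hae
  rw [hnull, ENNReal.toReal_zero, mul_zero]

end RandomizedTests

/-- Corollary 4.4: if some solution of problem (4.3) has `E_μ < α`, then every
solution `X_α` of problem (4.3) satisfies `λ·Q_α^c({X_α ≠ 1}) = 0`. -/
theorem all_optimal_charge_one {Ω : Type*} [MeasurableSpace Ω]
    (Emu Eups : (Ω → ℝ) → ℝ)
    (hEmu : IsSublinearOp Emu) (hEups : IsSublinearOp Eups)
    (α : ℝ) (hα0 : 0 < α) (hα1 : α < 1)
    (lam : ℝ) (hlam0 : 0 ≤ lam) (hlam1 : lam ≤ 1)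
    (Qc : Measure Ω) (hQc : IsProbabilityMeasure Qc)
    (Qp : (Ω → ℝ) → ℝ) (hQplin : IsLinearOp Qp)
    (hQppos : ∀ X : Ω → ℝ, MemX X → (∀ ω, 0 ≤ X ω) → 0 ≤ Qp X)
    (hQpone : Qp (fun _ => 1) = 1) (hQppure : PureAdditive Qp)
    (Qa : (Ω → ℝ) → ℝ) (hQalin : IsLinearOp Qa) (hQadom : Dominated Qa Eups)
    (hQasup : sSup (Qa '' testSet Emu α) = sSup (conjOp Eups '' testSet Emu α))
    (hQadec : ∀ X : Ω → ℝ, MemX X → Qa X = lam * ∫ ω, X ω ∂Qc + (1 - lam) * Qp X)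
    (γ : ℝ) (hγ : γ = sSup ((fun X : Ω → ℝ => lam * ∫ ω, X ω ∂Qc) '' testSet Emu α))
    (hex : ∃ Xa0 ∈ testSet Emu α, lam * ∫ ω, Xa0 ω ∂Qc = γ ∧ Emu Xa0 < α)
    (Xa : Ω → ℝ) (hXa : Xa ∈ testSet Emu α)
    (hXopt : lam * ∫ ω, Xa ω ∂Qc = γ) :
    lam * (Qc {ω | Xa ω ≠ 1}).toReal = 0 :=
  all_optimal_charge_one_general (hEmu.convexOn.subset (fun _ => memX_of_mem_randomizedTests)
    convex_randomizedTests) hlam0 hγ hex hXa hXopt
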